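/- arXiv:2305.14736 — 2 statements merged into one kernel-verified Lean document; each statement's English description precedes it below -/
import Mathlib

section
/- (Theorem 2, conditional form: no-regret iterates yield an approximately optimal and approximately feasible policy.) Assume R_o(μ) ≤ R_m for all μ ∈ P, the feasible set F is nonempty, K ≥ 1, and ε ≥ 0. Let μ_1, …, μ_K ∈ P and λ_1, …, λ_K ∈ Λ_B satisfy L(μ, λ_k) ≤ L(μ_k, λ_k) for all μ ∈ P and all k, together with the average-regret bound (1/K)·Σ_{k=1}^K L(μ_k, λ_k) ≤ inf_{λ ∈ Λ_B} (1/K)·Σ_{k=1}^K L(μ_k, λ) + ε. Then the averaged policy μ̄ = (1/K)·Σ_{k=1}^K μ_k satisfies R_o(μ̄) ≥ R* − ε, R_c(μ̄) ≥ ρ − (R_m − R* + ε)/B, and R_f(μ̄) ≥ 1 − δ − (R_m − R* + ε)/B. -/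
/-!
Write `μ̄` for the average of the iterates. Affine maps commute with averages, so
`(1/K) ∑ L(μ_k, l) = L(μ̄, l)` for every multiplier `l`. A feasible `ν` satisfies
`Ro ν ≤ L(ν, λ_k) ≤ L(μ_k, λ_k)`, because `λ_k ≥ 0` and `μ_k` is a best response; averaging over `k`
and applying the regret bound gives the key inequality `R* ≤ L(μ̄, l) + ε` for all `l ∈ Λ_B`.
The three claims are this inequality at the vertices `(0, 0)`, `(B, 0)`, `(0, B)` of `Λ_B`,
the last two combined with `Ro μ̄ ≤ Rm`, which holds because `μ̄ ∈ P` by convexity.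
-/

theorem affine_average {V : Type*} [AddCommGroup V] [Module ℝ V] (R : V →ᵃ[ℝ] ℝ)
    (K : ℕ) (hK : 1 ≤ K) (μ : ℕ → V) :
    R ((K : ℝ)⁻¹ • ∑ k ∈ Finset.Icc 1 K, μ k) = (K : ℝ)⁻¹ * ∑ k ∈ Finset.Icc 1 K, R (μ k) := by
  have hK0 : (K : ℝ) ≠ 0 := by positivity
  have h : ∀ v, R v = R.linear v + R 0 := fun v => congrFun R.decomp v
  rw [h, Finset.sum_congr rfl fun k _ => h (μ k)]
  simp only [map_smul, map_sum, smul_eq_mul, Finset.sum_add_distrib, Finset.sum_const,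
    Nat.card_Icc, Nat.add_sub_cancel, nsmul_eq_mul]
  field_simp

/-- **Theorem 2, conditional form.**  If each `μ_k` exactly maximizes `L(·, λ_k)` over `P`
and the iterates satisfy the average-regret bound `ε` over `Λ_B`, then the averaged policy
`μ̄ = (1/K) ∑ μ_k` is `ε`-optimal in objective reward and `(Rm − R* + ε)/B`-feasible in
both constraints. -/
theorem noregret_yields_approx_opt_feasible
    {V : Type*} [AddCommGroup V] [Module ℝ V]
    (P : Set V) (hPne : P.Nonempty) (hPconv : Convex ℝ P)
    (Ro Rc Rf : V →ᵃ[ℝ] ℝ)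
    (ρ δ B Rm : ℝ) (hB : 0 < B)
    (L : V → ℝ × ℝ → ℝ)
    (hL : ∀ μ lam, L μ lam = Ro μ + lam.1 * (Rc μ - ρ) + lam.2 * (Rf μ - (1 - δ)))
    (ΛB : Set (ℝ × ℝ))
    (hΛB : ΛB = {lam : ℝ × ℝ | 0 ≤ lam.1 ∧ 0 ≤ lam.2 ∧ lam.1 + lam.2 ≤ B})
    (hRo : ∀ μ ∈ P, Ro μ ≤ Rm)
    (F : Set V) (hF : F = {μ | μ ∈ P ∧ ρ ≤ Rc μ ∧ 1 - δ ≤ Rf μ})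
    (hFne : F.Nonempty)
    (Rstar : ℝ) (hRstar : Rstar = sSup ((fun μ => Ro μ) '' F))
    (K : ℕ) (hK : 1 ≤ K) (ε : ℝ) (hε : 0 ≤ ε)
    (μ : ℕ → V) (lam : ℕ → ℝ × ℝ)
    (hμP : ∀ k ∈ Finset.Icc 1 K, μ k ∈ P)
    (hlamB : ∀ k ∈ Finset.Icc 1 K, lam k ∈ ΛB)
    (hμopt : ∀ k ∈ Finset.Icc 1 K, ∀ ν ∈ P, L ν (lam k) ≤ L (μ k) (lam k))
    (hregret : (K : ℝ)⁻¹ * ∑ k ∈ Finset.Icc 1 K, L (μ k) (lam k) ≤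
        (⨅ l : ΛB, (K : ℝ)⁻¹ * ∑ k ∈ Finset.Icc 1 K, L (μ k) (l : ℝ × ℝ)) + ε)
    (μbar : V) (hμbar : μbar = (K : ℝ)⁻¹ • ∑ k ∈ Finset.Icc 1 K, μ k) :
    Ro μbar ≥ Rstar - ε ∧
    Rc μbar ≥ ρ - (Rm - Rstar + ε) / B ∧
    Rf μbar ≥ 1 - δ - (Rm - Rstar + ε) / B := by
  have hK0 : (0 : ℝ) < K := by positivity
  have havg : ∀ l : ℝ × ℝ, (K : ℝ)⁻¹ * ∑ k ∈ Finset.Icc 1 K, L (μ k) l = L μbar l := by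
    intro l
    rw [hL, hμbar, affine_average Ro K hK, affine_average Rc K hK, affine_average Rf K hK]
    simp only [hL, Finset.sum_add_distrib, ← Finset.mul_sum, Finset.sum_sub_distrib,
      Finset.sum_const, Nat.card_Icc, Nat.add_sub_cancel, nsmul_eq_mul]
    field_simp
  have hbarP : μbar ∈ P := by
    rw [hμbar, Finset.smul_sum]
    refine hPconv.sum_mem (fun _ _ => by positivity) ?_ hμP
    simp [hK0.ne']
  -- Boundedness below is what makes the real-valued infimum a genuine lower bound.
  have hbdd : BddBelow (Set.range fun l : ΛB => L μbar (l : ℝ × ℝ)) := by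
    refine ⟨Ro μbar - B * |Rc μbar - ρ| - B * |Rf μbar - (1 - δ)|, ?_⟩
    rintro _ ⟨⟨l, hl⟩, rfl⟩
    rw [hΛB] at hl
    obtain ⟨h1, h2, h3⟩ := hl
    simp only [hL]
    have a1 := mul_le_mul_of_nonneg_left (neg_abs_le (Rc μbar - ρ)) h1
    have a2 := mul_le_mul_of_nonneg_left (neg_abs_le (Rf μbar - (1 - δ))) h2
    have b1 := mul_le_mul_of_nonneg_right (by linarith : l.1 ≤ B) (abs_nonneg (Rc μbar - ρ))
    have b2 := mul_le_mul_of_nonneg_right (by linarith : l.2 ≤ B)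
      (abs_nonneg (Rf μbar - (1 - δ)))
    linarith
  have hopt : Rstar ≤ (K : ℝ)⁻¹ * ∑ k ∈ Finset.Icc 1 K, L (μ k) (lam k) := by
    rw [hRstar]
    refine csSup_le (hFne.image _) ?_
    rintro _ ⟨ν, hν, rfl⟩
    rw [hF] at hν
    obtain ⟨hνP, hνc, hνf⟩ := hν
    have hsum : ∑ k ∈ Finset.Icc 1 K, Ro ν ≤ ∑ k ∈ Finset.Icc 1 K, L (μ k) (lam k) := by
      refine Finset.sum_le_sum fun k hk => le_trans ?_ (hμopt k hk ν hνP)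
      have hl := hlamB k hk
      rw [hΛB] at hl
      have c1 := mul_nonneg hl.1 (sub_nonneg.2 hνc)
      have c2 := mul_nonneg hl.2.1 (sub_nonneg.2 hνf)
      rw [hL]
      linarith
    simp only [Finset.sum_const, Nat.card_Icc, Nat.add_sub_cancel, nsmul_eq_mul] at hsum
    rwa [le_inv_mul_iff₀ hK0]
  simp only [havg] at hregret
  have key : ∀ l ∈ ΛB, Rstar ≤ L μbar l + ε := fun l hl => by
    have := ciInf_le hbdd ⟨l, hl⟩
    linarith
  have k0 := key (0, 0) (by rw [hΛB]; simp [hB.le])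
  have k1 := key (B, 0) (by rw [hΛB]; simp [hB.le])
  have k2 := key (0, B) (by rw [hΛB]; simp [hB.le])
  simp only [hL, zero_mul, add_zero] at k0 k1 k2
  have hm := hRo μbar hbarP
  refine ⟨by linarith, ?_, ?_⟩
  · have : ρ - Rc μbar ≤ (Rm - Rstar + ε) / B := by
      rw [le_div_iff₀ hB]
      linarith
    linarith
  · have : 1 - δ - Rf μbar ≤ (Rm - Rstar + ε) / B := by
      rw [le_div_iff₀ hB]
      linarith
    linarith
end

section
/- (Lemma 4, full Lagrangian discounting identity.) Let (Ω, 𝒜, P) be a probability space, γ ∈ (0, 1), and T : Ω → ℕ a measurable random variable with P(T = t) = (1 − γ)·γ^t for every t ∈ ℕ. Then for all bounded sequences a, b, f : ℕ → ℝ and all reals λ^f, λ^c: E[Σ_{t=0}^{T} a_t] + λ^f·E[f(T + 1)] + λ^c·E[Σ_{t=0}^{T} b_t] = Σ_{t=0}^∞ γ^t·( a_t + (λ^f·(1 − γ)/γ)·f(t) + λ^c·b_t ) − (λ^f·(1 − γ)/γ)·f(0), where all sums converge absolutely. (Consequently, maximizing the Lagrangian under a geometrically distributed time horizon is equivalent to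 maximizing an infinite-horizon γ-discounted reward.) -/
open MeasureTheory

/-!
The law of `T` is Mathlib's geometric measure with success probability `1 - γ`, so every expectation
of `g (T)` is the series `∑ (1 - γ) γ^t g t` as soon as `∑ γ^t g t` converges absolutely
(`integrable_and_hasSum_of_geometric`). For `g` the partial sums `S` of a bounded sequence `c`,
summation by parts (`hasSum_geometric_partialSum`) turns this series into `∑ γ^t c t`. For
`g t = f (t + 1)`, a shift of the index gives `(1 - γ) / γ * (∑ γ^t f t - f 0)`. The identity is the
linear combination of these three series.
-/

lemma integrable_and_hasSum_of_geometric {Ω : Type*} [MeasurableSpace Ω] {μ : Measure Ω}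
    {γ : ℝ} (hγ : γ ∈ Set.Ioo (0 : ℝ) 1) {T : Ω → ℕ} (hTmeas : Measurable T)
    (hT : ∀ t : ℕ, μ {ω | T ω = t} = ENNReal.ofReal ((1 - γ) * γ ^ t))
    {g : ℕ → ℝ} (hg : Summable fun t => γ ^ t * g t) :
    Integrable (fun ω => g (T ω)) μ ∧
      HasSum (fun t => (1 - γ) * (γ ^ t * g t)) (∫ ω, g (T ω) ∂μ) := by
  obtain ⟨h0, h1⟩ := hγ
  let p : unitInterval := ⟨1 - γ, by constructor <;> linarith⟩
  have hpv : (p : ℝ) = 1 - γ := rfl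
  have hp : p ≠ 0 := by
    intro h
    have : (p : ℝ) = 0 := by rw [h]; rfl
    linarith
  have hlaw : μ.map T = ProbabilityTheory.geometricMeasure p := by
    refine Measure.ext_of_singleton fun t => ?_
    rw [ProbabilityTheory.geometricMeasure_singleton hp,
      Measure.map_apply hTmeas (measurableSet_singleton t), hpv, sub_sub_cancel, mul_comm]
    exact hT t
  have hgm : AEStronglyMeasurable g (μ.map T) :=
    (measurable_of_countable g).aestronglyMeasurable
  have hint : Integrable g (μ.map T) := by
    rw [hlaw, ProbabilityTheory.integrable_geometricMeasure_iff hp]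
    convert! hg.norm.mul_left (1 - γ) using 2 with t
    rw [hpv, norm_mul, norm_pow, Real.norm_of_nonneg h0.le]
    ring
  refine ⟨(integrable_map_measure hgm hTmeas.aemeasurable).1 hint, ?_⟩
  rw [← integral_map hTmeas.aemeasurable hgm]
  have hsum := ProbabilityTheory.hasSum_integral_geometricMeasure hp (hlaw ▸ hint)
  rw [hlaw]
  convert! hsum using 2 with t
  rw [hpv, smul_eq_mul]
  ring

lemma summable_geometric_mul_of_bounded {γ : ℝ} (hγ : γ ∈ Set.Ioo (0 : ℝ) 1) {c : ℕ → ℝ}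
    (hc : ∃ M : ℝ, ∀ t, |c t| ≤ M) : Summable fun t => γ ^ t * c t := by
  obtain ⟨M, hM⟩ := hc
  refine Summable.of_norm_bounded
    ((summable_geometric_of_lt_one hγ.1.le hγ.2).mul_right M) fun t => ?_
  rw [norm_mul, norm_pow, Real.norm_of_nonneg hγ.1.le]
  exact mul_le_mul_of_nonneg_left (hM t) (pow_nonneg hγ.1.le t)

/-- The partial sums grow at most linearly, so the geometric weight still makes them summable. -/
lemma summable_geometric_mul_partialSum {γ : ℝ} (hγ : γ ∈ Set.Ioo (0 : ℝ) 1) {c : ℕ → ℝ}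
    (hc : ∃ M : ℝ, ∀ t, |c t| ≤ M) :
    Summable fun t => γ ^ t * ∑ s ∈ Finset.range (t + 1), c s := by
  obtain ⟨M, hM⟩ := hc
  have hn : ‖γ‖ < 1 := by rw [Real.norm_of_nonneg hγ.1.le]; exact hγ.2
  have h1 := summable_pow_mul_geometric_of_norm_lt_one 1 hn
  have h2 := summable_geometric_of_lt_one hγ.1.le hγ.2
  refine Summable.of_norm_bounded ((h1.add h2).mul_right M) fun t => ?_
  rw [norm_mul, norm_pow, Real.norm_of_nonneg hγ.1.le]
  have hS : ‖∑ s ∈ Finset.range (t + 1), c s‖ ≤ (t + 1) * M := by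
    refine (norm_sum_le_of_le _ fun s _ => hM s).trans ?_
    simp
  calc γ ^ t * ‖∑ s ∈ Finset.range (t + 1), c s‖ ≤ γ ^ t * ((t + 1) * M) :=
        mul_le_mul_of_nonneg_left hS (pow_nonneg hγ.1.le t)
    _ = _ := by ring

/-- Summation by parts: with `u t = γ^t S t`, where `S` are the partial sums of `c`, one has
`(1 - γ) γ^t S t = u t - u (t + 1) + γ^(t+1) c (t + 1)`, and the difference telescopes to `c 0`. -/
lemma hasSum_geometric_partialSum {γ : ℝ} (hγ : γ ∈ Set.Ioo (0 : ℝ) 1) {c : ℕ → ℝ}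
    (hc : ∃ M : ℝ, ∀ t, |c t| ≤ M) :
    HasSum (fun t => (1 - γ) * (γ ^ t * ∑ s ∈ Finset.range (t + 1), c s))
      (∑' t, γ ^ t * c t) := by
  have hu := (summable_geometric_mul_partialSum hγ hc).hasSum
  have hv := (summable_geometric_mul_of_bounded hγ hc).hasSum
  have hu' := (hasSum_nat_add_iff' 1).2 hu
  have hv' := (hasSum_nat_add_iff' 1).2 hv
  convert! (hu.sub hu').add hv' using 1
  · funext t
    rw [Finset.sum_range_succ c (t + 1)]
    ring
  · simp

/-- **Lemma 4 (full Lagrangian discounting identity).**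
If `T` is a geometric random horizon with `P(T = t) = (1 − γ)γ^t` and `a, b, f` are
bounded real sequences, then for all reals `λ^f, λ^c`,
`E[∑_{t=0}^{T} a_t] + λ^f E[f(T+1)] + λ^c E[∑_{t=0}^{T} b_t]
  = ∑_{t=0}^∞ γ^t (a_t + (λ^f (1 − γ)/γ) f(t) + λ^c b_t) − (λ^f (1 − γ)/γ) f(0)`,
all sums converging absolutely.  Consequently, maximizing the Lagrangian under a
geometrically distributed time horizon is equivalent to maximizing an infinite-horizon
`γ`-discounted reward. -/
theorem geometric_horizon_lagrangian_discounting
    {Ω : Type*} [MeasurableSpace Ω] (μ : Measure Ω) [IsProbabilityMeasure μ]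
    (γ : ℝ) (hγ : γ ∈ Set.Ioo (0 : ℝ) 1)
    (T : Ω → ℕ) (hTmeas : Measurable T)
    (hT : ∀ t : ℕ, μ {ω | T ω = t} = ENNReal.ofReal ((1 - γ) * γ ^ t))
    (a b f : ℕ → ℝ)
    (ha : ∃ M : ℝ, ∀ t, |a t| ≤ M) (hb : ∃ M : ℝ, ∀ t, |b t| ≤ M)
    (hf : ∃ M : ℝ, ∀ t, |f t| ≤ M)
    (lamf lamc : ℝ) :
    Integrable (fun ω => ∑ t ∈ Finset.range (T ω + 1), a t) μ ∧
    Integrable (fun ω => ∑ t ∈ Finset.range (T ω + 1), b t) μ ∧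
    Integrable (fun ω => f (T ω + 1)) μ ∧
    Summable (fun t : ℕ =>
      |γ ^ t * (a t + lamf * (1 - γ) / γ * f t + lamc * b t)|) ∧
    (∫ ω, (∑ t ∈ Finset.range (T ω + 1), a t) ∂μ)
      + lamf * (∫ ω, f (T ω + 1) ∂μ)
      + lamc * (∫ ω, (∑ t ∈ Finset.range (T ω + 1), b t) ∂μ)
      = (∑' t : ℕ, γ ^ t * (a t + lamf * (1 - γ) / γ * f t + lamc * b t))
        - lamf * (1 - γ) / γ * f 0 := by
  have h0 : γ ≠ 0 := hγ.1.ne'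
  have hf' : ∃ M : ℝ, ∀ t, |f (t + 1)| ≤ M := hf.imp fun M h t => h (t + 1)
  obtain ⟨ia, sa⟩ := integrable_and_hasSum_of_geometric hγ hTmeas hT
    (summable_geometric_mul_partialSum hγ ha)
  obtain ⟨ib, sb⟩ := integrable_and_hasSum_of_geometric hγ hTmeas hT
    (summable_geometric_mul_partialSum hγ hb)
  obtain ⟨iF, sf⟩ := integrable_and_hasSum_of_geometric (g := fun t => f (t + 1)) hγ hTmeas hT
    (summable_geometric_mul_of_bounded hγ hf')
  have ea := sa.unique (hasSum_geometric_partialSum hγ ha)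
  have eb := sb.unique (hasSum_geometric_partialSum hγ hb)
  have Ha := (summable_geometric_mul_of_bounded hγ ha).hasSum
  have Hb := (summable_geometric_mul_of_bounded hγ hb).hasSum
  have Hf := (summable_geometric_mul_of_bounded hγ hf).hasSum
  have ef : ∫ ω, f (T ω + 1) ∂μ = (1 - γ) / γ * (∑' t, γ ^ t * f t - f 0) := by
    refine sf.unique ?_
    convert! ((hasSum_nat_add_iff' 1).2 Hf).mul_left ((1 - γ) / γ) using 1
    · funext t
      field_simp
      ring
    · simp
  have H : HasSum (fun t : ℕ => γ ^ t * (a t + lamf * (1 - γ) / γ * f t + lamc * b t))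
      (∑' t, γ ^ t * a t + lamf * (1 - γ) / γ * ∑' t, γ ^ t * f t
        + lamc * ∑' t, γ ^ t * b t) := by
    convert! (Ha.add (Hf.mul_left (lamf * (1 - γ) / γ))).add (Hb.mul_left lamc) using 2 with t
    ring
  refine ⟨ia, ib, iF, H.summable.abs, ?_⟩
  rw [H.tsum_eq, ea, eb, ef]
  ring
end
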